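/- Let m be a positive integer, let S ⊆ Q̄^m be closed under complex conjugation with (0,…,0) ∈ S, and suppose the complement Q̄^m \ S is enumerated as {v₁, v₂, …} (a finite or infinite injective enumeration). Let K = ℚ* + iℚ = {a + bi : a ∈ ℚ, a ≠ 0, b ∈ ℚ}, and let f ∈ K[[z₁,…,z_m]] be an entire function such that f(u) ∈ Q̄ for every u ∈ S and f(v_n) ∈ K·π^n = {κπ^n : κ ∈ K} for every n. Then the function ψ : ℂ^m → ℂ defined by ψ(z₁,…,z_m) = (f(z₁,…,z_m) + conj(f(conj z₁,…,conj z_m)))/2 is a transcendental entire function belonging to ℚ[[z₁,…,z_m]] whose exceptional set is exactly S, i.e., S_ψ = S. -/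

import Mathlib

open scoped BigOperators

/-!
The average `ψ` of `f` and `z ↦ conj (f (conj z))` has the real parts of the coefficients of `f` as
its coefficients; these are rational and nonzero. If `ψ` were algebraic, then along almost every
line through the origin it would grow at most like a fixed power, by Cauchy's bound for the roots
of a polynomial, so its homogeneous parts of large degree would vanish.

At a point of `S` both summands of `ψ` are algebraic. At an algebraic point outside `S` they are
`κ π ^ n` and `κ' π ^ l` with `κ`, `κ'` algebraic, and they do not cancel: for `n ≠ l` the degrees
differ, and for `n = l` the point is its own conjugate, so that the sum is `2 (re κ) π ^ n`.
Thus the value is a nonconstant polynomial in `π` with algebraic coefficients.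

That `π` is transcendental is proved as by Lindemann. If `iπ` were algebraic with conjugates `x`,
expanding `∏ (1 + exp x) = 0` would give a relation `k + ∑ exp b = 0` with `k` a positive integer
and the `b` nonzero, algebraic and stable under the Galois group. Approximating all `exp b` at once
by rational multiples of values of an integer polynomial at `b` turns it, for a large prime `p`,
into an integer that is smaller than `1` in absolute value and not divisible by `p`.
-/

section Arithmetic

open Polynomial

theorem isIntegral_pow_smul_aeval {R A : Type*} [CommRing R] [CommRing A] [Algebra R A]
    {l : R} {x : A} (hx : IsIntegral R (l • x)) {g : R[X]} {N : ℕ} (hg : g.natDegree ≤ N) :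
    IsIntegral R (l ^ N • aeval x g) := by
  rw [aeval_eq_sum_range' (Nat.lt_succ_of_le hg), Finset.smul_sum]
  refine IsIntegral.sum _ fun i hi => ?_
  have hiN : N - i + i = N := Nat.sub_add_cancel (Finset.mem_range_succ_iff.1 hi)
  have hterm : l ^ N • g.coeff i • x ^ i = (l ^ (N - i) * g.coeff i) • (l • x) ^ i := by
    rw [_root_.smul_pow, smul_smul, smul_smul, ← hiN, pow_add, Nat.add_sub_cancel, mul_right_comm]
  rw [hterm]
  exact (hx.pow i).smul _

theorem exists_eval_zero_ne_zero_and_forall_aeval_eq_zero {R A : Type*} [CommRing R] [IsDomain R]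
    [CommRing A] [IsDomain A] [Algebra R A] {B : Multiset A} (hB : ∀ b ∈ B, IsAlgebraic R b)
    (h0 : 0 ∉ B) : ∃ f : R[X], f.eval 0 ≠ 0 ∧ ∀ b ∈ B, aeval b f = 0 := by
  induction B using Multiset.induction_on with
  | empty => exact ⟨1, by simp, by simp⟩
  | cons b B ih =>
    simp only [Multiset.mem_cons, not_or, forall_eq_or_imp] at hB h0 ⊢
    obtain ⟨f, hf0, hf⟩ := ih hB.2 h0.2
    obtain ⟨q, hq0, hq⟩ := hB.1.exists_nonzero_coeff_and_aeval_eq_zero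
      (mem_nonZeroDivisors_of_ne_zero (Ne.symm h0.1))
    rw [coeff_zero_eq_eval_zero] at hq0
    exact ⟨q * f, by simp [hq0, hf0], by simp [hq], fun c hc => by simp [hf c hc]⟩

theorem map_algEquiv_aroots {K E : Type*} [Field K] [Field E] [Algebra K E] {q : K[X]}
    (hq : (q.map (algebraMap K E)).Splits) (σ : E ≃ₐ[K] E) : (q.aroots E).map σ = q.aroots E := by
  have h := hq.roots_map (σ : E →+* E)
  rw [Polynomial.map_map, show (σ : E →+* E).comp (algebraMap K E) = algebraMap K E from
    σ.toAlgHom.comp_algebraMap] at h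
  exact h.symm

variable {R K E : Type*} [CommRing R] [IsIntegrallyClosed R] [Field K] [Algebra R K]
  [IsFractionRing R K] [Field E] [Algebra R E] [Algebra K E] [IsScalarTower R K E] [IsGalois K E]

theorem exists_algebraMap_eq_of_isIntegral_of_forall_algEquiv_apply_eq {x : E}
    (hx : IsIntegral R x) (hfix : ∀ σ : E ≃ₐ[K] E, σ x = x) : ∃ y : R, algebraMap R E y = x := by
  obtain ⟨q, rfl⟩ := IntermediateField.mem_bot.1 ((InfiniteGalois.mem_bot_iff_fixed x).2 hfix)
  obtain ⟨y, rfl⟩ := IsIntegrallyClosed.isIntegral_iff.1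
    ((isIntegral_algebraMap_iff (algebraMap K E).injective).1 hx)
  exact ⟨y, IsScalarTower.algebraMap_apply R K E y⟩

variable (K) in
theorem exists_algebraMap_eq_leadingCoeff_pow_smul_sum_aeval {f g : R[X]} {B : Multiset E}
    (hf : ∀ b ∈ B, aeval b f = 0) (hB : ∀ σ : E ≃ₐ[K] E, B.map σ = B) {N : ℕ}
    (hg : g.natDegree ≤ N) :
    ∃ M : R, algebraMap R E M = f.leadingCoeff ^ N • (B.map fun b => aeval b g).sum := by
  refine exists_algebraMap_eq_of_isIntegral_of_forall_algEquiv_apply_eq (K := K) ?_ fun σ => ?_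
  · rw [Multiset.smul_sum, Multiset.map_map]
    refine IsIntegral.multiset_sum fun y hy => ?_
    obtain ⟨b, hb, rfl⟩ := Multiset.mem_map.1 hy
    exact isIntegral_pow_smul_aeval (isIntegral_leadingCoeff_smul f b (hf b hb)) hg
  · have hσ (b : E) : σ (aeval b g) = aeval (σ b) g :=
      (aeval_algHom_apply (σ.toAlgHom.restrictScalars R) b g).symm
    have hsmul (r : R) (y : E) : σ (r • y) = r • σ y := map_smul (σ.toAlgHom.restrictScalars R) r y
    rw [hsmul, map_multiset_sum, Multiset.map_map]
    simp only [Function.comp_def, hσ]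
    conv_rhs => rw [← hB σ, Multiset.map_map]
    rfl

end Arithmetic

section PiTranscendental

open Polynomial Complex

theorem exists_prime_gt_mul_pow_div_factorial_lt_one (a c : ℝ) (N : ℕ) :
    ∃ p > N, p.Prime ∧ a * c ^ p / (p - 1).factorial < 1 := by
  obtain ⟨N', hN'⟩ := Filter.eventually_atTop.1
    ((FloorSemiring.tendsto_mul_pow_div_factorial_sub_atTop a c 1).eventually_lt_const one_pos)
  obtain ⟨p, hp, hprime⟩ := Nat.exists_infinite_primes (max (N + 1) N')
  exact ⟨p, (le_max_left _ _).trans hp, hprime, hN' p ((le_max_right _ _).trans hp)⟩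

theorem norm_mul_add_sum_aeval_le {C : Multiset ℂ} {k n : ℤ} {p : ℕ} {g : ℤ[X]} {ε : ℝ}
    (hsum : k + (C.map exp).sum = 0) (hε : ∀ r ∈ C, ‖n • exp r - p • aeval r g‖ ≤ ε) :
    ‖(n * k + p * (C.map fun r => aeval r g).sum : ℂ)‖ ≤ C.card * ε := by
  have hneg : (n * k + p * (C.map fun r => aeval r g).sum : ℂ) =
      -(C.map fun r => n • exp r - p • aeval r g).sum := by
    rw [Multiset.sum_map_sub, Multiset.sum_map_zsmul, Multiset.sum_map_nsmul, zsmul_eq_mul,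
      nsmul_eq_mul]
    linear_combination (n : ℂ) * hsum
  calc ‖(n * k + p * (C.map fun r => aeval r g).sum : ℂ)‖
      = ‖(C.map fun r => n • exp r - p • aeval r g).sum‖ := by rw [hneg, norm_neg]
    _ ≤ (C.map fun r => ‖n • exp r - p • aeval r g‖).sum := by
      simpa only [Multiset.map_map, Function.comp_def] using
        norm_multiset_sum_le (C.map fun r => n • exp r - p • aeval r g)
    _ ≤ C.card * ε := by
      have h := Multiset.sum_le_card_nsmul (C.map fun r => ‖n • exp r - p • aeval r g‖) ε
        (Multiset.forall_mem_map_iff.2 hε)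
      rwa [Multiset.card_map, nsmul_eq_mul] at h

theorem abs_pow_mul_add_le {C : Multiset ℂ} {k n L M : ℤ} {p N : ℕ} {g : ℤ[X]} {ε : ℝ}
    (hM : (M : ℂ) = L ^ N * (C.map fun r => aeval r g).sum)
    (hsum : k + (C.map exp).sum = 0) (hε : ∀ r ∈ C, ‖n • exp r - p • aeval r g‖ ≤ ε) :
    |((L ^ N * (n * k) + p * M : ℤ) : ℝ)| ≤ |(L : ℝ)| ^ N * (C.card * ε) := by
  have hfactor : ((L ^ N * (n * k) + p * M : ℤ) : ℂ) =
      L ^ N * (n * k + p * (C.map fun r => aeval r g).sum) := by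
    push_cast
    linear_combination (p : ℂ) * hM
  rw [← norm_intCast, hfactor, norm_mul, norm_pow, norm_intCast]
  gcongr
  exact norm_mul_add_sum_aeval_le hsum hε

theorem intCast_add_sum_exp_ne_zero {E : Type*} [Field E] [Algebra ℚ E] [IsGalois ℚ E]
    (φ : E →+* ℂ) {B : Multiset E} (hB : ∀ σ : E ≃ₐ[ℚ] E, B.map σ = B) (h0 : 0 ∉ B)
    {k : ℤ} (hk : k ≠ 0) : k + ((B.map φ).map exp).sum ≠ 0 := by
  intro hsum
  have halg (b : E) : IsAlgebraic ℤ b :=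
    (IsFractionRing.isAlgebraic_iff ℤ ℚ E).2 (Algebra.IsAlgebraic.isAlgebraic b)
  obtain ⟨f, hf0, hf⟩ := exists_eval_zero_ne_zero_and_forall_aeval_eq_zero (fun b _ => halg b) h0
  have hf_ne : f ≠ 0 := by rintro rfl; simp at hf0
  have hφ (b : E) (q : ℤ[X]) : aeval (φ b) q = φ (aeval b q) :=
    aeval_algHom_apply φ.toIntAlgHom b q
  obtain ⟨c, hc⟩ := LindemannWeierstrass.exp_polynomial_approx f hf0
  obtain ⟨p, hpN, hp, hsmall⟩ := exists_prime_gt_mul_pow_div_factorial_lt_one B.card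
    (|(f.leadingCoeff : ℝ)| ^ f.natDegree * c)
    (max (f.eval 0).natAbs (max f.leadingCoeff.natAbs k.natAbs))
  obtain ⟨hpf, hpL, hpk⟩ : _ ∧ _ ∧ _ := by simpa only [gt_iff_lt, max_lt_iff] using hpN
  obtain ⟨n, hpn, g, hg, happrox⟩ := hc p hpf hp
  obtain ⟨M, hM⟩ := exists_algebraMap_eq_leadingCoeff_pow_smul_sum_aeval ℚ hf hB
    (hg.trans (Nat.sub_le _ _))
  have hMφ : (M : ℂ) =
      f.leadingCoeff ^ (p * f.natDegree) * ((B.map φ).map fun r => aeval r g).sum := by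
    simpa [hφ, zsmul_eq_mul, map_multiset_sum, Function.comp_def] using congrArg φ hM
  have hJ : f.leadingCoeff ^ (p * f.natDegree) * (n * k) + p * M = 0 := by
    have hle := abs_pow_mul_add_le hMφ hsum (n := n) (p := p) fun r hr => by
      obtain ⟨b, hb, rfl⟩ := Multiset.mem_map.1 hr
      exact happrox (mem_aroots.2 ⟨hf_ne, by rw [hφ, hf b hb, map_zero]⟩)
    have hlt : |(f.leadingCoeff : ℝ)| ^ (p * f.natDegree) *
        ((B.map φ).card * (c ^ p / (p - 1).factorial)) < 1 := by
      rw [Multiset.card_map]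
      convert! hsmall using 1
      ring
    exact Int.abs_lt_one_iff.1 (by exact_mod_cast hle.trans_lt hlt)
  have hdvd : (p : ℤ) ∣ f.leadingCoeff ^ (p * f.natDegree) * (n * k) :=
    ⟨-M, by linear_combination hJ⟩
  have hndvd {a : ℤ} (ha : a ≠ 0) (hap : a.natAbs < p) : ¬ (p : ℤ) ∣ a := fun h =>
    ha (Int.eq_zero_of_dvd_of_natAbs_lt_natAbs h hap)
  have hprime : Prime (p : ℤ) := Nat.prime_iff_prime_int.1 hp
  rcases hprime.dvd_or_dvd hdvd with hL | hnk
  · exact hndvd (leadingCoeff_ne_zero.2 hf_ne) hpL (hprime.dvd_of_dvd_pow hL)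
  · exact (hprime.dvd_or_dvd hnk).elim hpn (hndvd hk hpk)

theorem sum_exp_ne_zero {E : Type*} [Field E] [Algebra ℚ E] [IsGalois ℚ E]
    (φ : E →+* ℂ) {B : Multiset E} (hB : ∀ σ : E ≃ₐ[ℚ] E, B.map σ = B) (h0 : 0 ∈ B) :
    ((B.map φ).map exp).sum ≠ 0 := by
  classical
  have hsplit : Multiset.replicate (B.count 0) 0 + B.filter (· ≠ 0) = B := by
    rw [← Multiset.filter_eq', Multiset.filter_add_not]
  have hsum : ((B.map φ).map exp).sum =
      ((B.count 0 : ℤ) : ℂ) + (((B.filter (· ≠ 0)).map φ).map exp).sum := by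
    conv_lhs => rw [← hsplit]
    simp
  rw [hsum]
  refine intCast_add_sum_exp_ne_zero φ (fun σ => ?_) (by simp) (by simpa using h0)
  conv_rhs => rw [← hB σ, Multiset.filter_map]
  simp

/-- The multiset of sums of the submultisets of `A`. For `A` the conjugates of an algebraic number
`a`, these are the exponents obtained by expanding `∏ (1 + exp x)` over the conjugates `x`. -/
def subsetSums {M : Type*} [AddCommMonoid M] (A : Multiset M) : Multiset M :=
  A.powerset.map Multiset.sum

theorem subsetSums_cons {M : Type*} [AddCommMonoid M] (a : M) (A : Multiset M) :
    subsetSums (a ::ₘ A) = subsetSums A + (subsetSums A).map (a + ·) := by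
  simp [subsetSums, Multiset.powerset_cons]

theorem zero_mem_subsetSums {M : Type*} [AddCommMonoid M] (A : Multiset M) : 0 ∈ subsetSums A :=
  Multiset.mem_map.2 ⟨0, by simp, by simp⟩

theorem map_subsetSums {M N : Type*} [AddCommMonoid M] [AddCommMonoid N] (σ : M →+ N)
    (A : Multiset M) : (subsetSums A).map σ = subsetSums (A.map σ) := by
  induction A using Multiset.induction_on with
  | empty => simp [subsetSums]
  | cons a A ih => simp [subsetSums_cons, ← ih]

theorem prod_one_add_exp {M : Type*} [AddCommMonoid M] (φ : M →+ ℂ) (A : Multiset M) :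
    (A.map fun x => 1 + exp (φ x)).prod = (((subsetSums A).map φ).map exp).sum := by
  induction A using Multiset.induction_on with
  | empty => simp [subsetSums]
  | cons a A ih =>
    rw [Multiset.map_cons, Multiset.prod_cons, ih, subsetSums_cons]
    simp [exp_add, Multiset.sum_map_mul_left, add_mul]

theorem exp_ne_neg_one_of_isAlgebraic {z : ℂ} (hz : IsAlgebraic ℚ z) : exp z ≠ -1 := by
  intro hexp
  have : IsAlgClosure ℚ (algebraicClosure ℚ ℂ) := algebraicClosure.isAlgClosure ℚ ℂ
  have : IsGalois ℚ (algebraicClosure ℚ ℂ) := ⟨⟩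
  let φ := algebraMap (algebraicClosure ℚ ℂ) ℂ
  let a : algebraicClosure ℚ ℂ := ⟨z, mem_algebraicClosure_iff.2 hz⟩
  let A := (minpoly ℚ a).aroots (algebraicClosure ℚ ℂ)
  have ha : a ∈ A := mem_aroots.2
    ⟨minpoly.ne_zero (Algebra.IsIntegral.isIntegral a), minpoly.aeval ℚ a⟩
  have hA (σ : algebraicClosure ℚ ℂ ≃ₐ[ℚ] algebraicClosure ℚ ℂ) : A.map σ = A :=
    map_algEquiv_aroots (IsGalois.splits ℚ a) σ
  have hprod : (A.map fun x => 1 + exp (φ x)).prod = 0 :=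
    Multiset.prod_eq_zero (Multiset.mem_map.2 ⟨a, ha, (congrArg (1 + ·) hexp).trans (by ring)⟩)
  refine sum_exp_ne_zero φ (B := subsetSums A) (fun σ => ?_) (zero_mem_subsetSums A) ?_
  · exact (map_subsetSums σ.toLinearMap.toAddMonoidHom A).trans (congrArg subsetSums (hA σ))
  · exact (prod_one_add_exp φ.toAddMonoidHom A).symm.trans hprod

theorem transcendental_pi : Transcendental ℚ Real.pi := by
  intro hpi
  have hz : IsAlgebraic ℚ (Real.pi * I) :=
    (hpi.algebraMap (A := ℂ)).mul isIntegral_rat_I.isAlgebraic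
  exact exp_ne_neg_one_of_isAlgebraic hz exp_pi_mul_I

end PiTranscendental

section StarConjugation

variable {𝕜 E F : Type*} [NontriviallyNormedField 𝕜] [StarRing 𝕜]
  [NormedAddCommGroup E] [NormedSpace 𝕜 E] [StarAddMonoid E] [NormedStarGroup E] [StarModule 𝕜 E]
  [NormedAddCommGroup F] [NormedSpace 𝕜 F] [StarAddMonoid F] [NormedStarGroup F] [StarModule 𝕜 F]

/-- The multilinear map `w ↦ star (g (star w))`: the scalars are conjugated twice, so that it is
`𝕜`-multilinear like `g`. -/
noncomputable def starConjugate {ι : Type*} [Fintype ι]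
    (g : ContinuousMultilinearMap 𝕜 (fun _ : ι => E) F) :
    ContinuousMultilinearMap 𝕜 (fun _ : ι => E) F :=
  MultilinearMap.mkContinuous
    { toFun := fun w => star (g (star w))
      map_update_add' := fun w i x y => by simp [← Function.update_star]
      map_update_smul' := fun w i c x => by simp [← Function.update_star] }
    ‖g‖ fun w => by simpa [norm_star] using g.le_opNorm (star w)

theorem norm_starConjugate_le {ι : Type*} [Fintype ι]
    (g : ContinuousMultilinearMap 𝕜 (fun _ : ι => E) F) : ‖starConjugate g‖ ≤ ‖g‖ :=
  MultilinearMap.mkContinuous_norm_le _ (norm_nonneg _) _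

theorem analyticAt_star_star {f : E → F} {x : E} (hf : AnalyticAt 𝕜 f (star x)) :
    AnalyticAt 𝕜 (fun z => star (f (star z))) x := by
  obtain ⟨p, r, hp⟩ := hf
  refine ⟨fun n => starConjugate (p n), r, hp.r_le.trans
    (FormalMultilinearSeries.radius_le_of_le fun n => norm_starConjugate_le (p n)), hp.r_pos,
    fun {y} hy => ?_⟩
  have hy' : star y ∈ Metric.eball (0 : E) r := by
    simpa [← ofReal_norm, norm_star] using hy
  simp only [star_add]
  exact (hp.hasSum hy').star

end StarConjugation

section Growth

open Polynomial Asymptotics Bornology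

theorem iteratedDeriv_eq_zero_of_isBigO_pow {F : Type*} [NormedAddCommGroup F] [NormedSpace ℂ F]
    [CompleteSpace F] {g : ℂ → F} (hg : Differentiable ℂ g) {N n : ℕ}
    (hbound : g =O[cobounded ℂ] fun t => t ^ N) (hn : N < n) (z : ℂ) : iteratedDeriv n g z = 0 := by
  obtain ⟨C, hC⟩ := hbound.bound
  obtain ⟨r, -, hr⟩ := (Filter.hasBasis_cobounded_norm (E := ℂ)).eventually_iff.1 hC
  have hestimate : ∀ᶠ R : ℝ in Filter.atTop,
      ‖iteratedDeriv n g z‖ ≤ n.factorial * |C| * 2 ^ N * (R ^ N / R ^ n) := by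
    filter_upwards [Filter.eventually_ge_atTop ‖z‖, Filter.eventually_ge_atTop (r + ‖z‖),
      Filter.eventually_gt_atTop 0] with R hRz hRr hR
    have hsphere : ∀ w ∈ Metric.sphere z R, ‖g w‖ ≤ |C| * (2 * R) ^ N := fun w hw => by
      have hwz : ‖w - z‖ = R := mem_sphere_iff_norm.1 hw
      have hlower : r ≤ ‖w‖ := by linarith [norm_sub_le w z]
      have hupper : ‖w‖ ≤ 2 * R := by linarith [norm_sub_norm_le w z]
      calc ‖g w‖ ≤ C * ‖w ^ N‖ := hr hlower
        _ ≤ |C| * (2 * R) ^ N := by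
          rw [norm_pow]
          gcongr
          exact le_abs_self C
    calc ‖iteratedDeriv n g z‖ ≤ n.factorial * (|C| * (2 * R) ^ N) / R ^ n :=
          Complex.norm_iteratedDeriv_le_of_forall_mem_sphere_norm_le n hR hg.diffContOnCl hsphere
      _ = n.factorial * |C| * 2 ^ N * (R ^ N / R ^ n) := by ring
  have hlim := (tendsto_pow_div_pow_atTop_zero (𝕜 := ℝ) hn).const_mul (n.factorial * |C| * 2 ^ N)
  rw [mul_zero] at hlim
  exact norm_le_zero_iff.1 (ge_of_tendsto hlim hestimate)

theorem norm_le_of_isRoot {𝕜 : Type*} [NormedField 𝕜] {p : 𝕜[X]} (hp : p ≠ 0) {a : 𝕜}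
    (ha : p.IsRoot a) :
    ‖a‖ ≤ (∑ j ∈ Finset.range p.natDegree, ‖p.coeff j‖) * ‖p.leadingCoeff‖⁻¹ + 1 := by
  have h : ‖a‖₊ ≤ (∑ j ∈ Finset.range p.natDegree, ‖p.coeff j‖₊) * ‖p.leadingCoeff‖₊⁻¹ + 1 := by
    refine (ha.norm_lt_cauchyBound hp).le.trans ?_
    rw [cauchyBound, div_eq_mul_inv]
    gcongr
    exact Finset.sup_le fun j hj => Finset.single_le_sum (f := fun j => ‖p.coeff j‖₊)
      (fun _ _ => zero_le) hj
  simpa only [coe_nnnorm, NNReal.coe_add, NNReal.coe_mul, NNReal.coe_sum, NNReal.coe_inv,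
    NNReal.coe_one] using NNReal.coe_le_coe.2 h

theorem isBigO_pow_of_natDegree_le {𝕜 : Type*} [NormedField 𝕜] {p : 𝕜[X]} {N : ℕ}
    (hp : p.natDegree ≤ N) : p.eval =O[cobounded 𝕜] fun t => t ^ N := by
  simpa using isBigO_cobounded_of_degree_le (P := p) (Q := X ^ N)
    (by simpa using natDegree_le_iff_degree_le.1 hp)

theorem isBigO_pow_of_forall_isRoot {𝕜 : Type*} [NormedField 𝕜] {R : 𝕜[X][X]} (hR : R ≠ 0) {N : ℕ}
    (hN : ∀ j, (R.coeff j).natDegree ≤ N) {g : 𝕜 → 𝕜}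
    (hg : ∀ t, (R.map (evalRingHom t)).IsRoot (g t)) : g =O[cobounded 𝕜] fun t => t ^ N := by
  have hone : (fun _ => (1 : ℝ)) =O[cobounded 𝕜] fun t => t ^ N := by
    simpa using (isBigO_pow_of_natDegree_le (p := (1 : 𝕜[X])) (N := N) (by simp)).norm_left
  have hlead_ne : ∀ᶠ t in cobounded 𝕜, R.leadingCoeff.eval t ≠ 0 :=
    le_cofinite 𝕜 (eventually_cofinite_not_isRoot (leadingCoeff_ne_zero.2 hR))
  have hlead : (fun t => ‖R.leadingCoeff.eval t‖⁻¹) =O[cobounded 𝕜] fun _ => (1 : ℝ) := by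
    have h := isBigO_cobounded_of_degree_le (P := (1 : 𝕜[X])) (Q := R.leadingCoeff)
      (by simpa using zero_le_degree_iff.2 (leadingCoeff_ne_zero.2 hR))
    simpa using (h.inv_rev (by simp)).norm_norm
  have hsum : (fun t => ∑ j ∈ Finset.range R.natDegree, ‖(R.coeff j).eval t‖)
      =O[cobounded 𝕜] fun t => t ^ N :=
    IsBigO.fun_sum fun j _ => (isBigO_pow_of_natDegree_le (hN j)).norm_left
  have hquot : (fun t => (∑ j ∈ Finset.range R.natDegree, ‖(R.coeff j).eval t‖) *
      ‖R.leadingCoeff.eval t‖⁻¹) =O[cobounded 𝕜] fun t => t ^ N := by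
    have h := hsum.norm_right.mul hlead
    simp only [mul_one] at h
    exact h.of_norm_right
  refine IsBigO.trans (IsBigO.of_bound' ?_) (hquot.add hone)
  filter_upwards [hlead_ne] with t ht
  have hnatDegree := natDegree_map_of_leadingCoeff_ne_zero (evalRingHom t) ht
  have hcoeff (j : ℕ) : (R.map (evalRingHom t)).coeff j = (R.coeff j).eval t := coeff_map _ _
  have hne : R.map (evalRingHom t) ≠ 0 := fun h => ht (by
    simpa [h] using (hcoeff R.natDegree).symm)
  have hroot := norm_le_of_isRoot hne (hg t)
  simp only [leadingCoeff, hnatDegree, hcoeff] at hroot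
  exact hroot.trans (le_abs_self _)

theorem hasFPowerSeriesOnBall_ofScalars {𝕜 : Type*} [RCLike 𝕜] {a : ℕ → 𝕜} {g : 𝕜 → 𝕜}
    (hg : ∀ t, HasSum (fun n => a n * t ^ n) (g t)) :
    HasFPowerSeriesOnBall g (FormalMultilinearSeries.ofScalars 𝕜 a) 0 ⊤ := by
  refine ⟨top_le_iff.2 (ENNReal.eq_top_of_forall_nnreal_le fun r => ?_), by simp, fun {y} _ => ?_⟩
  · refine FormalMultilinearSeries.le_radius_of_tendsto _ (l := 0) ?_
    simpa [FormalMultilinearSeries.ofScalars_norm] using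
      (hg ((r : ℝ) : 𝕜)).summable.tendsto_atTop_zero.norm
  · simpa [FormalMultilinearSeries.ofScalars_apply_eq, mul_comm] using hg y

theorem eq_zero_of_hasSum_of_isBigO_pow {a : ℕ → ℂ} {g : ℂ → ℂ}
    (hg : ∀ t, HasSum (fun n => a n * t ^ n) (g t)) {N n : ℕ}
    (hbound : g =O[cobounded ℂ] fun t => t ^ N) (hn : N < n) : a n = 0 := by
  have hps := hasFPowerSeriesOnBall_ofScalars hg
  have hdiff : Differentiable ℂ g := by
    rw [← differentiableOn_univ, ← Metric.eball_top_eq_univ (0 : ℂ)]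
    exact hps.differentiableOn
  have hderiv : iteratedDeriv n g 0 = n.factorial * a n := by
    rw [iteratedDeriv_eq_iteratedFDeriv, ← hps.factorial_smul]
    simp
  rw [iteratedDeriv_eq_zero_of_isBigO_pow hdiff hbound hn] at hderiv
  exact (mul_eq_zero.1 hderiv.symm).resolve_left (by exact_mod_cast n.factorial_ne_zero)

end Growth

section HomogeneousPart

variable {ι : Type*} [Fintype ι] [DecidableEq ι]

/-- The homogeneous part of degree `n` of the power series `∑ a k * z ^ k`. -/
noncomputable def homogeneousPart {R : Type*} [CommSemiring R] (a : (ι → ℕ) → R) (n : ℕ) :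
    MvPolynomial ι R :=
  ∑ k ∈ Finset.piAntidiag Finset.univ n,
    MvPolynomial.monomial (Finsupp.equivFunOnFinite.symm k) (a k)

theorem coeff_homogeneousPart {R : Type*} [CommSemiring R] (a : (ι → ℕ) → R) (k : ι → ℕ) :
    (homogeneousPart a (∑ i, k i)).coeff (Finsupp.equivFunOnFinite.symm k) = a k := by
  simp [homogeneousPart, MvPolynomial.coeff_sum, MvPolynomial.coeff_monomial]

theorem eval_homogeneousPart {R : Type*} [CommSemiring R] (a : (ι → ℕ) → R) (n : ℕ) (u : ι → R) :
    MvPolynomial.eval u (homogeneousPart a n) =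
      ∑ k ∈ Finset.piAntidiag Finset.univ n, a k * ∏ i, u i ^ k i := by
  simp [homogeneousPart, MvPolynomial.eval_monomial, Finsupp.prod_fintype]

theorem eval_homogeneousPart_mul_pow {R : Type*} [CommSemiring R] (a : (ι → ℕ) → R) (n : ℕ)
    (u : ι → R) (t : R) : MvPolynomial.eval u (homogeneousPart a n) * t ^ n =
      ∑ k ∈ Finset.piAntidiag Finset.univ n, a k * ∏ i, (t • u) i ^ k i := by
  rw [eval_homogeneousPart, Finset.sum_mul]
  refine Finset.sum_congr rfl fun k hk => ?_
  rw [← (Finset.mem_piAntidiag.1 hk).1]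
  simp only [Pi.smul_apply, smul_eq_mul, mul_pow, Finset.prod_mul_distrib,
    Finset.prod_pow_eq_pow_sum]
  ring

theorem hasSum_homogeneousPart {R : Type*} [CommSemiring R] [TopologicalSpace R] [ContinuousAdd R]
    [RegularSpace R] {a : (ι → ℕ) → R} {ψ : (ι → R) → R}
    (hψ : ∀ z, HasSum (fun k : ι → ℕ => a k * ∏ i, z i ^ k i) (ψ z)) (u : ι → R) (t : R) :
    HasSum (fun n => MvPolynomial.eval u (homogeneousPart a n) * t ^ n) (ψ (t • u)) := by
  refine ((Equiv.sigmaFiberEquiv fun k : ι → ℕ => ∑ i, k i).hasSum_iff.2 (hψ (t • u))).sigma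
    fun n => ?_
  have hset : {k : ι → ℕ | ∑ i, k i = n} =
      (Finset.piAntidiag Finset.univ n : Finset (ι → ℕ)) := by
    ext k
    simp
  rw [eval_homogeneousPart_mul_pow]
  have h := Finset.hasSum (Finset.piAntidiag Finset.univ n)
    fun k : ι → ℕ => a k * ∏ i, (t • u) i ^ k i
  exact (Equiv.setCongr hset).hasSum_iff.2 h

end HomogeneousPart

section AlgebraicPowerSeries

open Polynomial Asymptotics Bornology

/-- The restriction of a polynomial to the line `t ↦ t • u`, as a polynomial in `t`. -/
noncomputable def lineRestriction {ι R : Type*} [CommSemiring R] (u : ι → R) :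
    MvPolynomial ι R →ₐ[R] R[X] :=
  MvPolynomial.aeval fun i => C (u i) * X

theorem eval_lineRestriction {ι R : Type*} [CommSemiring R] (u : ι → R) (t : R) :
    (evalRingHom t).comp (lineRestriction u).toRingHom = MvPolynomial.eval (t • u) := by
  ext i
  · simp [lineRestriction]
  · simpa [lineRestriction] using mul_comm (u i) t

theorem natDegree_lineRestriction_le {ι R : Type*} [CommSemiring R] (u : ι → R)
    (p : MvPolynomial ι R) : (lineRestriction u p).natDegree ≤ p.totalDegree := by
  simpa [lineRestriction] using MvPolynomial.aeval_natDegree_le (n := 1) p le_rfl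
    (fun i => C (u i) * X) fun i => (natDegree_C_mul_le _ _).trans natDegree_X_le

theorem isBigO_pow_comp_smul {ι 𝕜 : Type*} [NormedField 𝕜] {ψ : (ι → 𝕜) → 𝕜}
    {Q : (MvPolynomial ι 𝕜)[X]} (hQ : ∀ z, (Q.map (MvPolynomial.eval z)).IsRoot (ψ z))
    {N : ℕ} (hN : ∀ j, (Q.coeff j).totalDegree ≤ N) {u : ι → 𝕜}
    (hu : MvPolynomial.eval u Q.leadingCoeff ≠ 0) :
    (fun t : 𝕜 => ψ (t • u)) =O[cobounded 𝕜] fun t => t ^ N := by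
  refine isBigO_pow_of_forall_isRoot (R := Q.map (lineRestriction u).toRingHom) ?_ ?_ ?_
  · intro h
    refine hu ?_
    have hlead : lineRestriction u Q.leadingCoeff = 0 := by
      simpa using congrArg (coeff · Q.natDegree) h
    simpa [hlead] using (congrArg (· Q.leadingCoeff) (eval_lineRestriction u 1)).symm
  · intro j
    rw [coeff_map]
    exact (natDegree_lineRestriction_le u _).trans (hN j)
  · intro t
    rw [Polynomial.map_map, eval_lineRestriction]
    exact hQ (t • u)

theorem finite_support_of_forall_isRoot {ι : Type*} [Fintype ι] {a : (ι → ℕ) → ℂ} {ψ : (ι → ℂ) → ℂ}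
    (hψ : ∀ z, HasSum (fun k : ι → ℕ => a k * ∏ i, z i ^ k i) (ψ z))
    {Q : (MvPolynomial ι ℂ)[X]} (hQ0 : Q ≠ 0)
    (hQ : ∀ z, (Q.map (MvPolynomial.eval z)).IsRoot (ψ z)) : a.support.Finite := by
  classical
  let N := Q.support.sup fun j => (Q.coeff j).totalDegree
  have hN (j : ℕ) : (Q.coeff j).totalDegree ≤ N := by
    by_cases hj : j ∈ Q.support
    · exact Finset.le_sup (f := fun j => (Q.coeff j).totalDegree) hj
    · simp [notMem_support_iff.1 hj]
  have hpart {n : ℕ} (hn : N < n) : homogeneousPart a n = 0 := by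
    refine (mul_eq_zero.1 (MvPolynomial.funext fun u => ?_)).resolve_right
      (leadingCoeff_ne_zero.2 hQ0)
    rw [map_mul, map_zero, mul_eq_zero, or_iff_not_imp_right]
    exact fun hu => eq_zero_of_hasSum_of_isBigO_pow (hasSum_homogeneousPart hψ u)
      (isBigO_pow_comp_smul hQ hN hu) hn
  refine (Set.finite_Iic fun _ : ι => N).subset fun k hk i => ?_
  by_contra! hlt
  refine hk ?_
  rw [← coeff_homogeneousPart a k, hpart, MvPolynomial.coeff_zero]
  exact hlt.trans_le (Finset.single_le_sum (fun _ _ => Nat.zero_le _) (Finset.mem_univ i))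

theorem finite_support_of_eval_snoc_eq_zero {m : ℕ} {a : (Fin m → ℕ) → ℂ} {ψ : (Fin m → ℂ) → ℂ}
    (hψ : ∀ z, HasSum (fun k : Fin m → ℕ => a k * ∏ i, z i ^ k i) (ψ z))
    {P : MvPolynomial (Fin (m + 1)) ℂ} (hP0 : P ≠ 0)
    (hP : ∀ z : Fin m → ℂ, MvPolynomial.eval (Fin.snoc z (ψ z)) P = 0) : a.support.Finite := by
  have hinj : Function.Injective fun P : MvPolynomial (Fin (m + 1)) ℂ =>
      MvPolynomial.finSuccEquiv ℂ m (MvPolynomial.rename (finRotate (m + 1)) P) :=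
    (MvPolynomial.finSuccEquiv ℂ m).injective.comp
      (MvPolynomial.rename_injective _ (finRotate (m + 1)).injective)
  refine finite_support_of_forall_isRoot hψ
    (Q := MvPolynomial.finSuccEquiv ℂ m (MvPolynomial.rename (finRotate (m + 1)) P))
    (fun h => hP0 (hinj (by simpa using h))) fun z => ?_
  rw [IsRoot.def, ← MvPolynomial.eval_eq_eval_mv_eval', MvPolynomial.eval_rename, ← hP z,
    Fin.snoc_eq_cons_rotate]
  rfl

end AlgebraicPowerSeries

section ConjSymm

open Polynomial ComplexConjugate

theorem transcendental_mul_pow_add_mul_pow {K E : Type*} [Field K] [Field E] [Algebra K E] {τ : E}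
    (hτ : Transcendental K τ) {α β : E} (hα : IsAlgebraic K α) (hβ : IsAlgebraic K β)
    (hα0 : α ≠ 0) {l n : ℕ} (hln : l < n) : Transcendental K (α * τ ^ n + β * τ ^ l) := by
  lift α to algebraicClosure K E using mem_algebraicClosure_iff.2 hα
  lift β to algebraicClosure K E using mem_algebraicClosure_iff.2 hβ
  have hα0' : α ≠ 0 := by simpa using hα0
  let p : (algebraicClosure K E)[X] := C α * X ^ n + C β * X ^ l
  have hdeg : (C β * X ^ l).natDegree < (C α * X ^ n).natDegree := by
    rw [natDegree_C_mul_X_pow n α hα0']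
    exact (natDegree_C_mul_X_pow_le β l).trans_lt hln
  have hp : p.natDegree = n := by
    rw [natDegree_add_eq_left_of_natDegree_lt hdeg, natDegree_C_mul_X_pow n α hα0']
  have hlead : p.leadingCoeff ∈ nonZeroDivisors (algebraicClosure K E) :=
    mem_nonZeroDivisors_of_ne_zero
      (leadingCoeff_ne_zero.2 (ne_zero_of_natDegree_gt (hp.symm ▸ hln)))
  have htrans : Transcendental (algebraicClosure K E) (aeval τ p) :=
    hτ.algebraicClosure.aeval p (hp.symm ▸ hln.ne_bot) hlead
  simpa [p] using htrans.of_tower_top K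

theorem isAlgebraic_conj {x : ℂ} (hx : IsAlgebraic ℚ x) : IsAlgebraic ℚ (conj x) :=
  hx.algHom (Complex.conjAe.toAlgHom.restrictScalars ℚ)

theorem isAlgebraic_div_two {K E : Type*} [Field K] [Field E] [Algebra K E] {x : E}
    (hx : IsAlgebraic K x) : IsAlgebraic K (x / 2) :=
  (div_eq_mul_inv x 2).symm ▸ hx.mul (isAlgebraic_natCast 2).inv

variable {ι : Type*}

/-- The conjugation-invariant average of `f` and `z ↦ conj (f (conj z))`. -/
noncomputable def conjSymm (f : (ι → ℂ) → ℂ) (z : ι → ℂ) : ℂ :=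
  (f z + conj (f fun i => conj (z i))) / 2

/-- The exceptional set `S_f` of `f`: the algebraic points at which `f` takes an algebraic
value. -/
def exceptionalSet (f : (ι → ℂ) → ℂ) : Set (ι → ℂ) :=
  {z | (∀ i, IsAlgebraic ℚ (z i)) ∧ IsAlgebraic ℚ (f z)}

theorem analyticAt_conjSymm [Fintype ι] {f : (ι → ℂ) → ℂ} {z : ι → ℂ} (hf : AnalyticAt ℂ f z)
    (hf' : AnalyticAt ℂ f (star z)) : AnalyticAt ℂ (conjSymm f) z :=
  (hf.add (analyticAt_star_star hf')).div_const

theorem hasSum_conjSymm [Fintype ι] {f : (ι → ℂ) → ℂ} {c : (ι → ℕ) → ℂ}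
    (hf : ∀ z, HasSum (fun k : ι → ℕ => c k * ∏ i, z i ^ k i) (f z)) (z : ι → ℂ) :
    HasSum (fun k : ι → ℕ => ((c k).re : ℂ) * ∏ i, z i ^ k i) (conjSymm f z) := by
  have hstar := (hf fun i => conj (z i)).star
  refine (((hf z).add hstar).div_const 2).congr_fun fun k => ?_
  simp only [Complex.re_eq_add_conj, star_mul', RCLike.star_def, star_prod, star_pow,
    RingHomCompTriple.comp_apply, RingHom.id_apply]
  ring

theorem isAlgebraic_conjSymm {f : (ι → ℂ) → ℂ} {z : ι → ℂ} (hf : IsAlgebraic ℚ (f z))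
    (hf' : IsAlgebraic ℚ (f fun i => conj (z i))) : IsAlgebraic ℚ (conjSymm f z) :=
  isAlgebraic_div_two (hf.add (isAlgebraic_conj hf'))

theorem transcendental_conjSymm {f : (ι → ℂ) → ℂ} {z : ι → ℂ} {τ : ℝ} (hτ : Transcendental ℚ τ)
    {κ κ' : ℂ} (hκ : IsAlgebraic ℚ κ) (hκ' : IsAlgebraic ℚ κ') (hκre : κ.re ≠ 0)
    (hκ're : κ'.re ≠ 0) {n l : ℕ} (hn : 0 < n) (hz : f z = κ * (τ : ℂ) ^ n)
    (hz' : f (fun i => conj (z i)) = κ' * (τ : ℂ) ^ l)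
    (hnl : n = l → (fun i => conj (z i)) = z) : Transcendental ℚ (conjSymm f z) := by
  have hτ' : Transcendental ℚ (τ : ℂ) :=
    (transcendental_algebraMap_iff (algebraMap ℝ ℂ).injective).2 hτ
  have hα : IsAlgebraic ℚ (κ / 2) := isAlgebraic_div_two hκ
  have hβ : IsAlgebraic ℚ (conj κ' / 2) := isAlgebraic_div_two (isAlgebraic_conj hκ')
  have hα0 : κ / 2 ≠ 0 := div_ne_zero (fun h => hκre (by simp [h])) two_ne_zero
  have hβ0 : conj κ' / 2 ≠ 0 :=
    div_ne_zero (fun h => hκ're (by simp [(map_eq_zero _).1 h])) two_ne_zero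
  have hvalue : conjSymm f z = κ / 2 * (τ : ℂ) ^ n + conj κ' / 2 * (τ : ℂ) ^ l := by
    rw [conjSymm, hz, hz', map_mul, map_pow, Complex.conj_ofReal]
    ring
  rw [hvalue]
  rcases lt_trichotomy n l with hlt | rfl | hgt
  · rw [add_comm]
    exact transcendental_mul_pow_add_mul_pow hτ' hβ hα hβ0 hlt
  · have hτ0 : (τ : ℂ) ≠ 0 := fun h => hτ' (h ▸ isAlgebraic_zero)
    rw [hnl rfl, hz] at hz'
    obtain rfl : κ = κ' := mul_right_cancel₀ (pow_ne_zero n hτ0) hz'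
    have hre : κ / 2 + conj κ / 2 ≠ 0 := by
      rw [← add_div, ← Complex.re_eq_add_conj]
      exact_mod_cast hκre
    simpa [add_mul] using
      transcendental_mul_pow_add_mul_pow hτ' (hα.add hβ) isAlgebraic_zero hre hn
  · exact transcendental_mul_pow_add_mul_pow hτ' hα hβ hα0 hgt

theorem exceptionalSet_conjSymm {S : Set (ι → ℂ)} (hSalg : ∀ z ∈ S, ∀ i, IsAlgebraic ℚ (z i))
    (hSconj : ∀ z ∈ S, (fun i => conj (z i)) ∈ S) {τ : ℝ} (hτ : Transcendental ℚ τ)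
    {I : Set ℕ} (hIpos : ∀ n ∈ I, 0 < n) {v : ℕ → ι → ℂ}
    (hvrange : {z : ι → ℂ | (∀ i, IsAlgebraic ℚ (z i)) ∧ z ∉ S} ⊆ v '' I) {f : (ι → ℂ) → ℂ}
    (hfS : ∀ u ∈ S, IsAlgebraic ℚ (f u))
    (hfv : ∀ n ∈ I, ∃ κ : ℂ, IsAlgebraic ℚ κ ∧ κ.re ≠ 0 ∧ f (v n) = κ * (τ : ℂ) ^ n) :
    exceptionalSet (conjSymm f) = S := by
  ext z
  refine ⟨fun ⟨hz, hψ⟩ => ?_, fun hz =>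
    ⟨hSalg z hz, isAlgebraic_conjSymm (hfS z hz) (hfS _ (hSconj z hz))⟩⟩
  by_contra hzS
  have hconj : (fun i => conj (z i)) ∉ S := fun h => hzS (by simpa using hSconj _ h)
  obtain ⟨n, hn, hnz⟩ := hvrange ⟨hz, hzS⟩
  obtain ⟨l, hl, hlz⟩ := hvrange ⟨fun i => isAlgebraic_conj (hz i), hconj⟩
  obtain ⟨κ, hκ, hκre, hfn⟩ := hfv n hn
  obtain ⟨κ', hκ', hκ're, hfl⟩ := hfv l hl
  rw [hnz] at hfn
  rw [hlz] at hfl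
  exact transcendental_conjSymm hτ hκ hκ' hκre hκ're (hIpos n hn) hfn hfl
    (fun h => by rw [← hlz, ← hnz, h]) hψ

theorem isAlgebraic_ratCast_add_ratCast_mul_I (a b : ℚ) :
    IsAlgebraic ℚ ((a : ℂ) + (b : ℂ) * Complex.I) :=
  (isAlgebraic_ratCast ℚ a).add
    ((isAlgebraic_ratCast ℚ b).mul Complex.isIntegral_rat_I.isAlgebraic)

end ConjSymm

theorem psi_is_transcendental_with_exceptional_set_S_general {m : ℕ} {S : Set (Fin m → ℂ)}
    (hSalg : ∀ z ∈ S, ∀ i, IsAlgebraic ℚ (z i))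
    (hSconj : ∀ z ∈ S, (fun i => (starRingEnd ℂ) (z i)) ∈ S)
    {τ : ℝ} (hτ : Transcendental ℚ τ) {I : Set ℕ} (hIpos : ∀ n ∈ I, 0 < n)
    {v : ℕ → (Fin m → ℂ)}
    (hvrange : {z : Fin m → ℂ | (∀ i, IsAlgebraic ℚ (z i)) ∧ z ∉ S} ⊆ v '' I)
    {f : (Fin m → ℂ) → ℂ} (hfent : ∀ x, AnalyticAt ℂ f x) {c : (Fin m → ℕ) → ℂ}
    (hc_rat : ∀ k, ((c k).re : ℂ) ∈ Set.range ((↑) : ℚ → ℂ))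
    (hc_inf : {k | (c k).re ≠ 0}.Infinite)
    (hsum : ∀ z : Fin m → ℂ, HasSum (fun k : Fin m → ℕ => c k * ∏ i, z i ^ k i) (f z))
    (hfS : ∀ u ∈ S, IsAlgebraic ℚ (f u))
    (hfv : ∀ n ∈ I, ∃ κ : ℂ, IsAlgebraic ℚ κ ∧ κ.re ≠ 0 ∧ f (v n) = κ * (τ : ℂ) ^ n) :
    (∀ x, AnalyticAt ℂ (conjSymm f) x) ∧
    ¬ (∃ P : MvPolynomial (Fin (m + 1)) ℂ, P ≠ 0 ∧
        ∀ z : Fin m → ℂ, MvPolynomial.eval (Fin.snoc z (conjSymm f z)) P = 0) ∧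
    (∃ c' : (Fin m → ℕ) → ℂ, (∀ k, c' k ∈ Set.range ((↑) : ℚ → ℂ)) ∧
        ∀ z : Fin m → ℂ, HasSum (fun k : Fin m → ℕ => c' k * ∏ i, z i ^ k i) (conjSymm f z)) ∧
    exceptionalSet (conjSymm f) = S := by
  refine ⟨fun x => analyticAt_conjSymm (hfent x) (hfent _), fun ⟨P, hP0, hP⟩ => hc_inf ?_,
    ⟨fun k => ((c k).re : ℂ), hc_rat, hasSum_conjSymm hsum⟩,
    exceptionalSet_conjSymm hSalg hSconj hτ hIpos hvrange hfS hfv⟩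
  simpa [Function.support] using finite_support_of_eval_snoc_eq_zero (hasSum_conjSymm hsum) hP0 hP

/-- given `S ⊆ Q̄^m` closed under conjugation with `0 ∈ S`, an injective
enumeration `{v_n}` (indexed by positive integers, finite or infinite) of `Q̄^m \ S`,
`K = ℚ* + iℚ`, and an entire `f ∈ K[[z₁,…,z_m]]` with `f(u) ∈ Q̄` for `u ∈ S` and
`f(v_n) ∈ K·π^n` for all `n`, the function
`ψ(z) = (f(z) + conj(f(conj z₁,…,conj z_m)))/2` is a transcendental entire function in
`ℚ[[z₁,…,z_m]]` whose exceptional set is exactly `S`. -/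
theorem psi_is_transcendental_with_exceptional_set_S
    (m : ℕ) (hm : 0 < m)
    (S : Set (Fin m → ℂ))
    (hSalg : ∀ z ∈ S, ∀ i, IsAlgebraic ℚ (z i))
    (hSconj : ∀ z ∈ S, (fun i => (starRingEnd ℂ) (z i)) ∈ S)
    (hS0 : (0 : Fin m → ℂ) ∈ S)
    (I : Set ℕ) (hIpos : ∀ n ∈ I, 0 < n)
    (v : ℕ → (Fin m → ℂ)) (hvinj : Set.InjOn v I)
    (hvrange : v '' I = {z : Fin m → ℂ | (∀ i, IsAlgebraic ℚ (z i)) ∧ z ∉ S})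
    (K : Set ℂ)
    (hK : K = {z : ℂ | ∃ a b : ℚ, a ≠ 0 ∧ z = (a : ℂ) + (b : ℂ) * Complex.I})
    (f : (Fin m → ℂ) → ℂ) (hfent : ∀ x, AnalyticAt ℂ f x)
    (c : (Fin m → ℕ) → ℂ) (hcK : ∀ k, c k ∈ K)
    (hsum : ∀ z : Fin m → ℂ, HasSum (fun k : Fin m → ℕ => c k * ∏ i, z i ^ k i) (f z))
    (hfS : ∀ u ∈ S, IsAlgebraic ℚ (f u))
    (hfv : ∀ n ∈ I, ∃ κ ∈ K, f (v n) = κ * (Real.pi : ℂ) ^ n) :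
    (∀ x, AnalyticAt ℂ
        (fun z : Fin m → ℂ =>
          (f z + (starRingEnd ℂ) (f fun i => (starRingEnd ℂ) (z i))) / 2) x) ∧
    ¬ (∃ P : MvPolynomial (Fin (m + 1)) ℂ, P ≠ 0 ∧
        ∀ z : Fin m → ℂ,
          MvPolynomial.eval
            (Fin.snoc z ((f z + (starRingEnd ℂ) (f fun i => (starRingEnd ℂ) (z i))) / 2))
            P = 0) ∧
    (∃ c' : (Fin m → ℕ) → ℂ, (∀ k, c' k ∈ Set.range ((↑) : ℚ → ℂ)) ∧
        ∀ z : Fin m → ℂ,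
          HasSum (fun k : Fin m → ℕ => c' k * ∏ i, z i ^ k i)
            ((f z + (starRingEnd ℂ) (f fun i => (starRingEnd ℂ) (z i))) / 2)) ∧
    {z : Fin m → ℂ | (∀ i, IsAlgebraic ℚ (z i)) ∧
        IsAlgebraic ℚ ((f z + (starRingEnd ℂ) (f fun i => (starRingEnd ℂ) (z i))) / 2)}
      = S := by
  subst hK
  have : Nonempty (Fin m) := ⟨0, hm⟩
  have hKre : ∀ κ : ℂ, (∃ a b : ℚ, a ≠ 0 ∧ κ = a + b * Complex.I) →
      IsAlgebraic ℚ κ ∧ κ.re ≠ 0 ∧ (κ.re : ℂ) ∈ Set.range ((↑) : ℚ → ℂ) := by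
    rintro _ ⟨a, b, ha, rfl⟩
    exact ⟨isAlgebraic_ratCast_add_ratCast_mul_I a b, by simpa using ha, a, by simp⟩
  refine psi_is_transcendental_with_exceptional_set_S_general hSalg hSconj transcendental_pi hIpos
    hvrange.ge hfent (fun k => (hKre _ (hcK k)).2.2) ?_ hsum hfS fun n hn => ?_
  · simpa [(hKre _ (hcK _)).2.1] using Set.infinite_univ
  · obtain ⟨κ, hκ, hfκ⟩ := hfv n hn
    exact ⟨κ, (hKre κ hκ).1, (hKre κ hκ).2.1, hfκ⟩
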